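/- For every half-integer S ≥ 1/2 and every ρ ∈ [−1,0), the strict inequalities (S/(S+1))² g(ρ) < f_S(ρ) < f_{S+1}(ρ) < g(ρ) hold. -/

import Mathlib

/-!
Since `F*(3, ρ)` has the sign of `ρ`, the common numerator `A = 1 - F*(3, ρ)` is positive for
`ρ < 0`. With `c = (S + 1) / S > 1` one has `f_S = A / (1 - c ρ)` and `g = A / (1 - ρ)`. For
`ρ < 0` the denominator `1 - c ρ` increases with `c`, and `c` decreases to `1` as `S` grows, whence
the two upper inequalities. The lower one is `1 - c ρ < c² (1 - ρ)`, whose two sides differ by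
`(c - 1) (1 + c (1 - ρ))`.
-/

open Matrix MeasureTheory Filter
open scoped BigOperators RealInnerProductSpace Kronecker

noncomputable section

/-- The spin value `S = n/2` for a half-integer spin encoded by `n : ℕ` (`n ≥ 1` means `S ≥ 1/2`). -/
def spinVal (n : ℕ) : ℝ := (n : ℝ) / 2

/-- The Gauss hypergeometric function `₂F₁(1/2, 1/2; 5/2; x)`, defined by its power series
`Σ_{k≥0} ((1/2)_k (1/2)_k)/((5/2)_k k!) x^k`, where `(a)_k` is the rising factorial. -/
def hypF (x : ℝ) : ℝ :=
  ∑' k : ℕ,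
    ((∏ m ∈ Finset.range k, ((1:ℝ)/2 + m)) * (∏ m ∈ Finset.range k, ((1:ℝ)/2 + m))
      / ((∏ m ∈ Finset.range k, ((5:ℝ)/2 + m)) * (Nat.factorial k))) * x ^ k

/-- `F*(3, ρ) = (8/(3π)) ρ ₂F₁(1/2,1/2;5/2;ρ²)`. -/
def Fstar (ρ : ℝ) : ℝ := (8 / (3 * Real.pi)) * ρ * hypF (ρ ^ 2)

/-- `f_S(ρ) = (1 − F*(3,ρ)) / (1 − ((S+1)/S) ρ)`. -/
def fS (S ρ : ℝ) : ℝ := (1 - Fstar ρ) / (1 - ((S + 1) / S) * ρ)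

/-- `g(ρ) = (1 − F*(3,ρ)) / (1 − ρ)`. -/
def gBOV (ρ : ℝ) : ℝ := (1 - Fstar ρ) / (1 - ρ)

/-- `α_GP(S) = inf_{ρ ∈ [−1, 0)} f_S(ρ)`. -/
def alphaGP (S : ℝ) : ℝ := sInf (fS S '' Set.Ico (-1 : ℝ) 0)

/-- `α_BOV = inf_{ρ ∈ [−1, 0)} g(ρ)`. -/
def alphaBOV : ℝ := sInf (gBOV '' Set.Ico (-1 : ℝ) 0)

section LinearOrderedField

variable {𝕜 : Type*} [Field 𝕜] [LinearOrder 𝕜] [IsStrictOrderedRing 𝕜] {A b c ρ : 𝕜}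

theorem div_one_sub_mul_lt_div_one_sub_mul (hA : 0 < A) (hρ : ρ < 0) (hb : b * ρ < 1)
    (hbc : b < c) : A / (1 - c * ρ) < A / (1 - b * ρ) :=
  div_lt_div_of_pos_left hA (sub_pos.2 hb)
    (sub_lt_sub_left (mul_lt_mul_of_neg_right hbc hρ) 1)

theorem one_sub_mul_lt_sq_mul_one_sub (hc : 1 < c) (hcρ : c * ρ < 1) :
    1 - c * ρ < c ^ 2 * (1 - ρ) := by
  have hfactor : 0 < (c - 1) * (1 + (c - c * ρ)) :=
    mul_pos (sub_pos.2 hc) (by linarith)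
  linear_combination hfactor

theorem inv_sq_mul_div_one_sub_lt (hA : 0 < A) (hc : 1 < c) (hcρ : c * ρ < 1) :
    c⁻¹ ^ 2 * (A / (1 - ρ)) < A / (1 - c * ρ) :=
  calc c⁻¹ ^ 2 * (A / (1 - ρ)) = A / (c ^ 2 * (1 - ρ)) := by
        rw [inv_pow, inv_mul_eq_div, div_div, mul_comm]
    _ < A / (1 - c * ρ) :=
        div_lt_div_of_pos_left hA (sub_pos.2 hcρ) (one_sub_mul_lt_sq_mul_one_sub hc hcρ)

theorem one_lt_add_one_div_self (hb : 0 < b) : 1 < (b + 1) / b :=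
  (one_lt_div hb).2 (lt_add_one b)

theorem add_one_div_self_mul_lt_one (hb : 0 < b) (hρ : ρ ≤ 0) : (b + 1) / b * ρ < 1 :=
  (mul_nonpos_of_nonneg_of_nonpos (by positivity) hρ).trans_lt one_pos

theorem strictAntiOn_add_one_div_self : StrictAntiOn (fun b : 𝕜 ↦ (b + 1) / b) (Set.Ioi 0) := by
  intro b hb c hc hbc
  simp only [add_div, div_self (ne_of_gt hb), div_self (ne_of_gt hc)]
  exact add_lt_add_right (one_div_lt_one_div_of_lt hb hbc) 1

end LinearOrderedField

-- For `1 < x` the series diverges and `hypF x` is the junk value `0` of `tsum`.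
theorem hypF_nonneg {x : ℝ} (hx : 0 ≤ x) : 0 ≤ hypF x :=
  tsum_nonneg fun k ↦ by positivity

theorem Fstar_nonpos {ρ : ℝ} (hρ : ρ ≤ 0) : Fstar ρ ≤ 0 :=
  mul_nonpos_of_nonpos_of_nonneg (mul_nonpos_of_nonneg_of_nonpos (by positivity) hρ)
    (hypF_nonneg (sq_nonneg ρ))

theorem one_sub_Fstar_pos {ρ : ℝ} (hρ : ρ ≤ 0) : 0 < 1 - Fstar ρ :=
  sub_pos.2 ((Fstar_nonpos hρ).trans_lt one_pos)

theorem strictMonoOn_fS {ρ : ℝ} (hρ : ρ < 0) : StrictMonoOn (fS · ρ) (Set.Ioi 0) :=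
  fun _ hS _ hT hST ↦
    div_one_sub_mul_lt_div_one_sub_mul (one_sub_Fstar_pos hρ.le) hρ
      (add_one_div_self_mul_lt_one hT hρ.le) (strictAntiOn_add_one_div_self hS hT hST)

theorem fS_lt_gBOV {S ρ : ℝ} (hS : 0 < S) (hρ : ρ < 0) : fS S ρ < gBOV ρ := by
  have h := div_one_sub_mul_lt_div_one_sub_mul (one_sub_Fstar_pos hρ.le) hρ
    (by linarith : 1 * ρ < 1) (one_lt_add_one_div_self hS)
  rwa [one_mul] at h

theorem sq_mul_gBOV_lt_fS {S ρ : ℝ} (hS : 0 < S) (hρ : ρ ≤ 0) :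
    (S / (S + 1)) ^ 2 * gBOV ρ < fS S ρ := by
  rw [← inv_div (S + 1) S]
  exact inv_sq_mul_div_one_sub_lt (one_sub_Fstar_pos hρ) (one_lt_add_one_div_self hS)
    (add_one_div_self_mul_lt_one hS hρ)

theorem spinVal_pos {n : ℕ} (hn : 1 ≤ n) : 0 < spinVal n :=
  half_pos (Nat.cast_pos.2 hn)

theorem fS_chain_inequalities_general {S ρ : ℝ} (hS : 0 < S) (hρ : ρ ∈ Set.Ico (-1 : ℝ) 0) :
    (S / (S + 1)) ^ 2 * gBOV ρ < fS S ρ ∧ fS S ρ < fS (S + 1) ρ ∧ fS (S + 1) ρ < gBOV ρ :=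
  have hS' : 0 < S + 1 := add_pos hS one_pos
  ⟨sq_mul_gBOV_lt_fS hS hρ.2.le, strictMonoOn_fS hρ.2 hS hS' (lt_add_one S), fS_lt_gBOV hS' hρ.2⟩

/-- For every half-integer `S ≥ 1/2` and every `ρ ∈ [−1, 0)`,
`(S/(S+1))² g(ρ) < f_S(ρ) < f_{S+1}(ρ) < g(ρ)`. -/
theorem fS_chain_inequalities (n : ℕ) (hn : 1 ≤ n) (ρ : ℝ) (hρ : ρ ∈ Set.Ico (-1 : ℝ) 0) :
    (spinVal n / (spinVal n + 1)) ^ 2 * gBOV ρ < fS (spinVal n) ρ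
      ∧ fS (spinVal n) ρ < fS (spinVal n + 1) ρ
      ∧ fS (spinVal n + 1) ρ < gBOV ρ :=
  fS_chain_inequalities_general (spinVal_pos hn) hρ

end
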